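/- Let N = (S, A, T) be a P/T Petri net. If R ⊆ S × S is a place bisimulation, then the set M(R) of all linkings over R (i.e., all finite multisets of pairs drawn from R) is a structure-preserving bisimulation. -/

import Mathlib

/-- A transition of a P/T net: a triple (pre-set, label, post-set). -/
structure PNTrans (S A : Type) where
  pre : Multiset S
  label : A
  post : Multiset S
deriving DecidableEq

/-- A P/T Petri net over places `S` and labels `A`: a finite set of transitions,
each with a nonempty pre-set. -/
structure PetriNet (S A : Type) [DecidableEq S] [DecidableEq A] where
  T : Finset (PNTrans S A)
  pre_ne : ∀ t ∈ T, t.pre ≠ 0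

/-- The additive closure `R⊕` of a place relation `R`: the least relation on markings
containing `(θ, θ)` and closed under adding `R`-related places on both sides. -/
inductive AddClosure {S : Type} (R : S → S → Prop) : Multiset S → Multiset S → Prop
  | zero : AddClosure R 0 0
  | cons {s1 s2 : S} {m1 m2 : Multiset S} :
      R s1 s2 → AddClosure R m1 m2 → AddClosure R (s1 ::ₘ m1) (s2 ::ₘ m2)

/-- `Fires N m t m'` : transition `t` of `N` is enabled at marking `m` and its firing
produces `m' = (m ⊖ pre(t)) ⊕ post(t)`. -/
def Fires {S A : Type} [DecidableEq S] [DecidableEq A]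
    (N : PetriNet S A) (m : Multiset S) (t : PNTrans S A) (m' : Multiset S) : Prop :=
  t ∈ N.T ∧ t.pre ≤ m ∧ m' = m - t.pre + t.post

/-- A place bisimulation on `N`. -/
def IsPlaceBisim {S A : Type} [DecidableEq S] [DecidableEq A]
    (N : PetriNet S A) (R : S → S → Prop) : Prop :=
  ∀ m1 m2, AddClosure R m1 m2 →
    (∀ t1 m1', Fires N m1 t1 m1' →
      ∃ t2 m2', Fires N m2 t2 m2' ∧ AddClosure R t1.pre t2.pre ∧
        t1.label = t2.label ∧ AddClosure R t1.post t2.post ∧ AddClosure R m1' m2') ∧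
    (∀ t2 m2', Fires N m2 t2 m2' →
      ∃ t1 m1', Fires N m1 t1 m1' ∧ AddClosure R t1.pre t2.pre ∧
        t1.label = t2.label ∧ AddClosure R t1.post t2.post ∧ AddClosure R m1' m2')

/-- Place bisimilarity `m1 ~p m2`. -/
def PlaceBisimilar {S A : Type} [DecidableEq S] [DecidableEq A]
    (N : PetriNet S A) (m1 m2 : Multiset S) : Prop :=
  ∃ R : S → S → Prop, IsPlaceBisim N R ∧ AddClosure R m1 m2

/-- An interleaving bisimulation on the markings of `N`. -/
def IsIntBisim {S A : Type} [DecidableEq S] [DecidableEq A]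
    (N : PetriNet S A) (Q : Multiset S → Multiset S → Prop) : Prop :=
  ∀ m1 m2, Q m1 m2 →
    (∀ t1 m1', Fires N m1 t1 m1' →
      ∃ t2 m2', Fires N m2 t2 m2' ∧ t1.label = t2.label ∧ Q m1' m2') ∧
    (∀ t2 m2', Fires N m2 t2 m2' →
      ∃ t1 m1', Fires N m1 t1 m1' ∧ t1.label = t2.label ∧ Q m1' m2')

/-- Interleaving bisimilarity `m1 ~int m2`. -/
def IntBisimilar {S A : Type} [DecidableEq S] [DecidableEq A]
    (N : PetriNet S A) (m1 m2 : Multiset S) : Prop :=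
  ∃ Q, IsIntBisim N Q ∧ Q m1 m2

/-- First projection of a linking. -/
def lproj1 {S : Type} (l : Multiset (S × S)) : Multiset S := l.map Prod.fst

/-- Second projection of a linking. -/
def lproj2 {S : Type} (l : Multiset (S × S)) : Multiset S := l.map Prod.snd

/-- A structure-preserving bisimulation on `N`: a set of linkings. -/
def IsSpBisim {S A : Type} [DecidableEq S] [DecidableEq A]
    (N : PetriNet S A) (R : Set (Multiset (S × S))) : Prop :=
  ∀ l ∈ R, ∀ c ≤ l,
    (∀ t1 ∈ N.T, t1.pre = lproj1 c →
      ∃ t2 ∈ N.T, t1.label = t2.label ∧ t2.pre = lproj2 c ∧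
        ∃ cb : Multiset (S × S), t1.post = lproj1 cb ∧ t2.post = lproj2 cb ∧
          l - c + cb ∈ R) ∧
    (∀ t2 ∈ N.T, t2.pre = lproj2 c →
      ∃ t1 ∈ N.T, t1.label = t2.label ∧ t1.pre = lproj1 c ∧
        ∃ cb : Multiset (S × S), t1.post = lproj1 cb ∧ t2.post = lproj2 cb ∧
          l - c + cb ∈ R)

/-- Structure-preserving bisimilarity `m1 ~sp m2`. -/
def SpBisimilar {S A : Type} [DecidableEq S] [DecidableEq A]
    (N : PetriNet S A) (m1 m2 : Multiset S) : Prop :=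
  ∃ (R : Set (Multiset (S × S))) (l : Multiset (S × S)),
    IsSpBisim N R ∧ l ∈ R ∧ lproj1 l = m1 ∧ lproj2 l = m2

theorem addClosure_of_linking {S : Type} {R : S → S → Prop} (c : Multiset (S × S)) :
    (∀ p ∈ c, R p.1 p.2) → AddClosure R (lproj1 c) (lproj2 c) := by
  induction c using Multiset.induction_on with
  | empty => intro _; exact AddClosure.zero
  | cons a c ih =>
    intro hc
    simp only [lproj1, lproj2, Multiset.map_cons]
    exact AddClosure.cons (hc a (Multiset.mem_cons_self a c))
      (ih fun p hp => hc p (Multiset.mem_cons_of_mem hp))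

theorem linking_of_addClosure {S : Type} {R : S → S → Prop} {m1 m2 : Multiset S}
    (h : AddClosure R m1 m2) :
    ∃ c : Multiset (S × S), m1 = lproj1 c ∧ m2 = lproj2 c ∧ ∀ p ∈ c, R p.1 p.2 := by
  induction h with
  | zero => exact ⟨0, rfl, rfl, by simp⟩
  | @cons s1 s2 m1 m2 hR _ ih =>
    obtain ⟨c, h1, h2, hc⟩ := ih
    refine ⟨(s1, s2) ::ₘ c, by simp [h1, lproj1], by simp [h2, lproj2], ?_⟩
    intro p hp
    rcases Multiset.mem_cons.1 hp with rfl | hp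
    · exact hR
    · exact hc p hp

theorem addClosure_card {S : Type} {R : S → S → Prop} {m1 m2 : Multiset S}
    (h : AddClosure R m1 m2) : m1.card = m2.card := by
  induction h with
  | zero => rfl
  | cons _ _ ih => simp [ih]

/-- if `R` is a place bisimulation then the set `M(R)` of all linkings
over `R` is a structure-preserving bisimulation. -/
theorem placeBisim_linkings_spBisim {S A : Type} [Fintype S] [Fintype A]
    [DecidableEq S] [DecidableEq A] (N : PetriNet S A)
    (R : S → S → Prop) (h : IsPlaceBisim N R) :
    IsSpBisim N {l : Multiset (S × S) | ∀ p ∈ l, R (Prod.fst p) (Prod.snd p)} := by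
  intro l hl c hcl
  have hc : ∀ p ∈ c, R p.1 p.2 := fun p hp => hl p (Multiset.mem_of_le hcl hp)
  have hcards : (lproj1 c).card = (lproj2 c).card := by simp [lproj1, lproj2]
  have hfin : ∀ cb : Multiset (S × S), (∀ p ∈ cb, R p.1 p.2) →
      ∀ p ∈ l - c + cb, R p.1 p.2 := by
    intro cb hcb p hp
    rcases Multiset.mem_add.1 hp with hp | hp
    · exact hl p (Multiset.mem_of_le (Multiset.sub_le_self l c) hp)
    · exact hcb p hp
  obtain ⟨hF, hB⟩ := h _ _ (addClosure_of_linking c hc)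
  constructor
  · intro t1 ht1 hpre
    obtain ⟨t2, m2', ⟨ht2, hle, _⟩, hp, hlab, hpost, _⟩ :=
      hF t1 _ ⟨ht1, hpre.le, rfl⟩
    obtain ⟨cb, h1, h2, hcb⟩ := linking_of_addClosure hpost
    have hcard := addClosure_card hp
    rw [hpre] at hcard
    exact ⟨t2, ht2, hlab, Multiset.eq_of_le_of_card_le hle (by omega),
      cb, h1, h2, hfin cb hcb⟩
  · intro t2 ht2 hpre
    obtain ⟨t1, m1', ⟨ht1, hle, _⟩, hp, hlab, hpost, _⟩ :=
      hB t2 _ ⟨ht2, hpre.le, rfl⟩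
    obtain ⟨cb, h1, h2, hcb⟩ := linking_of_addClosure hpost
    have hcard := addClosure_card hp
    rw [hpre] at hcard
    exact ⟨t1, ht1, hlab, Multiset.eq_of_le_of_card_le hle (by omega),
      cb, h1, h2, hfin cb hcb⟩
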